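/- Let X be an ∞-pseudo-metric space and n ≥ 0 an integer. The asymptotic dimension of X is at most n if and only if for every real r > 0 and every integer m ≥ 1 there is a family of subsets M(i,j) of X, indexed by 1 ≤ i ≤ m and 0 ≤ j ≤ n, such that: every M(i,j) is of scale-r-dimension 0; for every i, ⋃_{j=0}^{n} M(i,j) = X (each row covers X); and for all i ≠ i' and every 1 ≤ j ≤ n, the sets M(i,j) and M(i',j) are scale-r-disjoint (each column, except the 0-th, is scale-r-disjoint). -/

import Mathlib

open Set
open scoped ENNReal

/-- `y` is joined to `x` by a scale-`r`-chain in `A`: a finite sequence of points of `A`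
starting at `x` and ending at `y`, consecutive points of which have intersecting open
`r`-balls. -/
def ScaleChain {X : Type*} [PseudoEMetricSpace X] (r : ℝ) (A : Set X) (x y : X) : Prop :=
  ∃ n : ℕ, ∃ c : ℕ → X, (∀ i ≤ n, c i ∈ A) ∧ c 0 = x ∧ c n = y ∧
    ∀ i < n,
      (EMetric.ball (c i) (ENNReal.ofReal r) ∩
        EMetric.ball (c (i + 1)) (ENNReal.ofReal r)).Nonempty

/-- The scale-`r`-component of `x` in `A`: all points of `A` joined to `x` by a
scale-`r`-chain in `A`. -/
def ScaleComponent {X : Type*} [PseudoEMetricSpace X] (r : ℝ) (A : Set X) (x : X) : Set X :=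
  {y | ScaleChain r A x y}

/-- `A` has scale-`r`-dimension `0`: there is a finite bound on the diameters of all
scale-`r`-components of `A`. -/
def ScaleDimZero {X : Type*} [PseudoEMetricSpace X] (r : ℝ) (A : Set X) : Prop :=
  ∃ M : ℝ≥0∞, M ≠ ⊤ ∧ ∀ x ∈ A, EMetric.diam (ScaleComponent r A x) ≤ M

/-- `C` and `D` are scale-`r`-disjoint: their open `r`-neighborhoods are disjoint. -/
def ScaleDisjoint {X : Type*} [PseudoEMetricSpace X] (r : ℝ) (C D : Set X) : Prop :=
  Metric.thickening r C ∩ Metric.thickening r D = ∅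

/-!
Suppose `B` has scale-`r`-dimension `0`. A matrix for a large neighborhood of `A` is turned into a
matrix with one more column for `A ∪ B`. Choose a radius `a i` for every row `i`. Row `i` keeps its
entries inside the `a i`-neighborhood of `A`; the part of `B` in the shell of width `2 * r` around
that neighborhood becomes the new entry; the part of `B` beyond the shell is far enough away to be
added to the `0`-th entry. If the radii differ by at least `4 * r`, then the shells of different
rows are scale-`r`-disjoint. Induction on the number of columns concludes: each step passes to a
neighborhood of bounded width, which only requires a larger initial scale.
-/

section

variable {X : Type*} [PseudoEMetricSpace X] {r s a b δ : ℝ} {A B C D : Set X} {x y : X}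

namespace ScaleChain

theorem refl (hx : x ∈ A) : ScaleChain r A x x :=
  ⟨0, fun _ => x, fun _ _ => hx, rfl, rfl, fun i hi => absurd hi i.not_lt_zero⟩

theorem left_mem (h : ScaleChain r A x y) : x ∈ A := by
  obtain ⟨k, c, hcA, rfl, -, -⟩ := h
  exact hcA 0 k.zero_le

theorem mono (h : ScaleChain r A x y) (hrs : r ≤ s) (hAB : A ⊆ B) : ScaleChain s B x y := by
  obtain ⟨k, c, hcA, hx, hy, hball⟩ := h
  have eball_mono (z : X) :
      Metric.eball z (ENNReal.ofReal r) ⊆ Metric.eball z (ENNReal.ofReal s) :=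
    Metric.eball_subset_eball (ENNReal.ofReal_le_ofReal hrs)
  exact ⟨k, c, fun i hi => hAB (hcA i hi), hx, hy, fun i hi =>
    (hball i hi).mono (inter_subset_inter (eball_mono _) (eball_mono _))⟩

theorem exists_of_thickening (hr : 0 ≤ r) (hδ : 0 ≤ δ)
    (h : ScaleChain r (Metric.thickening δ A) x y) :
    ∃ p q, ScaleChain (r + δ) A p q ∧
      edist x p < ENNReal.ofReal δ ∧ edist y q < ENNReal.ofReal δ := by
  obtain ⟨k, c, hc, rfl, rfl, hball⟩ := h
  have exists_near (i : ℕ) : ∃ p, i ≤ k → p ∈ A ∧ edist (c i) p < ENNReal.ofReal δ := by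
    by_cases hi : i ≤ k
    · obtain ⟨p, hp⟩ := (Metric.mem_thickening_iff_exists_edist_lt _ _).1 (hc i hi)
      exact ⟨p, fun _ => hp⟩
    · exact ⟨c i, fun hi' => absurd hi' hi⟩
  choose p hp using exists_near
  have eball_subset (i : ℕ) (hi : i ≤ k) : Metric.eball (c i) (ENNReal.ofReal r) ⊆
      Metric.eball (p i) (ENNReal.ofReal (r + δ)) := by
    rw [ENNReal.ofReal_add hr hδ]
    exact fun z hz => (edist_triangle z (c i) (p i)).trans_lt (ENNReal.add_lt_add hz (hp i hi).2)
  exact ⟨p 0, p k,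
    ⟨k, p, fun i hi => (hp i hi).1, rfl, rfl, fun i hi =>
      (hball i hi).mono (inter_subset_inter (eball_subset i hi.le) (eball_subset (i + 1) hi))⟩,
    (hp 0 k.zero_le).2, (hp k le_rfl).2⟩

end ScaleChain

theorem scaleDisjoint_iff_disjoint :
    ScaleDisjoint r C D ↔ Disjoint (Metric.thickening r C) (Metric.thickening r D) :=
  disjoint_iff_inter_eq_empty.symm

namespace ScaleDisjoint

theorem symm (h : ScaleDisjoint r C D) : ScaleDisjoint r D C :=
  scaleDisjoint_iff_disjoint.2 (scaleDisjoint_iff_disjoint.1 h).symm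

theorem mono (h : ScaleDisjoint r C D) (hAC : A ⊆ C) (hBD : B ⊆ D) : ScaleDisjoint r A B :=
  scaleDisjoint_iff_disjoint.2 <| (scaleDisjoint_iff_disjoint.1 h).mono
    (Metric.thickening_subset_of_subset r hAC) (Metric.thickening_subset_of_subset r hBD)

theorem of_subset_thickening (hab : a + 2 * r ≤ b)
    (hC : C ⊆ Metric.thickening a A) (hD : Disjoint D (Metric.thickening b A)) :
    ScaleDisjoint r C D := by
  refine scaleDisjoint_iff_disjoint.2 (disjoint_left.2 fun z hzC hzD => ?_)
  obtain ⟨d, hd, hzd⟩ := (Metric.mem_thickening_iff_exists_edist_lt _ _).1 hzD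
  have hzA : z ∈ Metric.thickening (r + a) A :=
    Metric.thickening_thickening_subset r a A (Metric.thickening_subset_of_subset r hC hzC)
  have hdA : d ∈ Metric.thickening (r + (r + a)) A :=
    Metric.thickening_thickening_subset r (r + a) A
      ((Metric.mem_thickening_iff_exists_edist_lt _ _).2 ⟨z, hzA, by rwa [edist_comm]⟩)
  exact disjoint_left.1 hD hd (Metric.thickening_mono (by linarith) A hdA)

end ScaleDisjoint

theorem ScaleChain.of_union_left (hAB : ScaleDisjoint r A B) (h : ScaleChain r (A ∪ B) x y)
    (hx : x ∈ A) : ScaleChain r A x y := by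
  obtain ⟨k, c, hc, rfl, rfl, hball⟩ := h
  refine ⟨k, c, fun i => ?_, rfl, rfl, hball⟩
  induction i with
  | zero => exact fun _ => hx
  | succ i ih =>
    intro hi
    refine (hc _ hi).resolve_right fun hB => ?_
    obtain ⟨z, hzi, hzi'⟩ := hball i hi
    exact disjoint_left.1 (scaleDisjoint_iff_disjoint.1 hAB)
      ((Metric.mem_thickening_iff_exists_edist_lt _ _).2 ⟨c i, ih (Nat.le_of_succ_le hi), hzi⟩)
      ((Metric.mem_thickening_iff_exists_edist_lt _ _).2 ⟨c (i + 1), hB, hzi'⟩)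

theorem scaleDimZero_iff_forall_edist_le :
    ScaleDimZero r A ↔ ∃ M : ℝ≥0∞, M ≠ ⊤ ∧ ∀ x y, ScaleChain r A x y → edist x y ≤ M := by
  constructor
  · rintro ⟨M, hM, hdiam⟩
    refine ⟨M, hM, fun x y hxy => ?_⟩
    have hx : x ∈ ScaleComponent r A x := ScaleChain.refl hxy.left_mem
    exact (Metric.edist_le_ediam_of_mem hx hxy).trans (hdiam x hxy.left_mem)
  · rintro ⟨M, hM, hdist⟩
    refine ⟨M + M, ENNReal.add_ne_top.2 ⟨hM, hM⟩, fun x _ => Metric.ediam_le fun y hy z hz => ?_⟩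
    exact (edist_triangle_left y z x).trans (add_le_add (hdist x y hy) (hdist x z hz))

namespace ScaleDimZero

theorem mono (hB : ScaleDimZero s B) (hrs : r ≤ s) (hAB : A ⊆ B) : ScaleDimZero r A := by
  rw [scaleDimZero_iff_forall_edist_le] at hB ⊢
  obtain ⟨M, hM, hdist⟩ := hB
  exact ⟨M, hM, fun x y hxy => hdist x y (hxy.mono hrs hAB)⟩

theorem subset (hB : ScaleDimZero r B) (hAB : A ⊆ B) : ScaleDimZero r A :=
  hB.mono le_rfl hAB

theorem thickening (hA : ScaleDimZero (r + δ) A) (hr : 0 ≤ r) (hδ : 0 ≤ δ) :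
    ScaleDimZero r (Metric.thickening δ A) := by
  rw [scaleDimZero_iff_forall_edist_le] at hA ⊢
  obtain ⟨M, hM, hdist⟩ := hA
  refine ⟨ENNReal.ofReal δ + M + ENNReal.ofReal δ,
    ENNReal.add_ne_top.2 ⟨ENNReal.add_ne_top.2 ⟨ENNReal.ofReal_ne_top, hM⟩,
      ENNReal.ofReal_ne_top⟩, fun x y hxy => ?_⟩
  obtain ⟨p, q, hpq, hxp, hyq⟩ := hxy.exists_of_thickening hr hδ
  calc edist x y ≤ edist x p + edist p q + edist q y := edist_triangle4 x p q y
    _ = edist x p + edist p q + edist y q := by rw [edist_comm q y]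
    _ ≤ _ := by gcongr; exact hdist p q hpq

theorem union (hA : ScaleDimZero r A) (hB : ScaleDimZero r B) (hAB : ScaleDisjoint r A B) :
    ScaleDimZero r (A ∪ B) := by
  rw [scaleDimZero_iff_forall_edist_le] at hA hB ⊢
  obtain ⟨M, hM, hdistA⟩ := hA
  obtain ⟨N, hN, hdistB⟩ := hB
  refine ⟨max M N, (max_lt hM.lt_top hN.lt_top).ne, fun x y hxy => ?_⟩
  rcases hxy.left_mem with hx | hx
  · exact (hdistA x y (hxy.of_union_left hAB hx)).trans (le_max_left M N)
  · rw [union_comm] at hxy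
    exact (hdistB x y (hxy.of_union_left hAB.symm hx)).trans (le_max_right M N)

end ScaleDimZero

/-- The part of `B` in the shell `a ≤ d(·, A) < a + 2 * r` around `A`. The width `2 * r` makes the
two sides of the shell scale-`r`-disjoint. -/
def scaleShell (r a : ℝ) (A B : Set X) : Set X :=
  B ∩ (Metric.thickening (a + 2 * r) A \ Metric.thickening a A)

theorem scaleDisjoint_scaleShell (hab : a + 4 * r ≤ b) :
    ScaleDisjoint r (scaleShell r a A B) (scaleShell r b A B) :=
  .of_subset_thickening (by linarith) (fun _ hx => hx.2.1)
    (disjoint_left.2 fun _ hx => hx.2.2)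

theorem subset_thickening_union_scaleShell_union_sdiff :
    B ⊆ Metric.thickening a A ∪ scaleShell r a A B ∪ B \ Metric.thickening (a + 2 * r) A := by
  intro x hx
  simp only [scaleShell, mem_union, mem_inter_iff, mem_sdiff]
  tauto

/-- A matrix of sets of scale-`r`-dimension `0`, each row of which covers `Y` and each column of
which except the `0`-th is scale-`r`-disjoint. The `0`-th column `Z` is kept apart from the other
columns, indexed by `κ`. -/
structure IsScaleMatrix {ι κ : Type*} (r : ℝ) (Y : Set X) (Z : ι → Set X) (M : ι → κ → Set X) :
    Prop where
  scaleDimZero_zero : ∀ i, ScaleDimZero r (Z i)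
  scaleDimZero : ∀ i j, ScaleDimZero r (M i j)
  subset_row : ∀ i, Y ⊆ Z i ∪ ⋃ j, M i j
  scaleDisjoint : ∀ j, Pairwise fun i i' => ScaleDisjoint r (M i j) (M i' j)

theorem IsScaleMatrix.cons {ι : Type*} [LinearOrder ι] {n : ℕ} {Y : Set X} {Z : ι → Set X}
    {M : ι → Fin n → Set X} (h : IsScaleMatrix r Y Z M) {a : ι → ℝ} (ha : ∀ i, 0 < a i)
    (hgap : ∀ i i', i < i' → a i + 4 * r ≤ a i') (hY : ∀ i, Metric.thickening (a i) A ⊆ Y)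
    (hB : ScaleDimZero r B) :
    IsScaleMatrix r (A ∪ B)
      (fun i => Z i ∩ Metric.thickening (a i) A ∪ B \ Metric.thickening (a i + 2 * r) A)
      (fun i => Fin.cons (scaleShell r (a i) A B) fun j => M i j ∩ Metric.thickening (a i) A :
        ι → Fin (n + 1) → Set X) where
  scaleDimZero_zero i :=
    ((h.scaleDimZero_zero i).subset inter_subset_left).union (hB.subset sdiff_subset)
      (.of_subset_thickening le_rfl inter_subset_right disjoint_sdiff_left)
  scaleDimZero i := Fin.forall_fin_succ.2
    ⟨hB.subset inter_subset_left, fun j => (h.scaleDimZero i j).subset inter_subset_left⟩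
  subset_row i := by
    have thickening_subset : Metric.thickening (a i) A ⊆
        Z i ∩ Metric.thickening (a i) A ∪ ⋃ j, M i j ∩ Metric.thickening (a i) A := by
      rw [← iUnion_inter, ← union_inter_distrib_right]
      exact subset_inter ((hY i).trans (h.subset_row i)) Subset.rfl
    have A_subset : A ⊆ Metric.thickening (a i) A := Metric.self_subset_thickening (ha i) A
    have B_subset : B ⊆ Metric.thickening (a i) A ∪ scaleShell r (a i) A B ∪
        B \ Metric.thickening (a i + 2 * r) A := subset_thickening_union_scaleShell_union_sdiff
    rw [iUnion_cons]
    calc A ∪ B ⊆ Metric.thickening (a i) A ∪ scaleShell r (a i) A B ∪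
        B \ Metric.thickening (a i + 2 * r) A :=
          union_subset ((A_subset.trans subset_union_left).trans subset_union_left) B_subset
      _ ⊆ (Z i ∩ Metric.thickening (a i) A ∪ ⋃ j, M i j ∩ Metric.thickening (a i) A) ∪
          scaleShell r (a i) A B ∪ B \ Metric.thickening (a i + 2 * r) A := by gcongr
      _ = _ := by ac_rfl
  scaleDisjoint := Fin.forall_fin_succ.2
    ⟨fun i i' hii' => hii'.lt_or_gt.elim (fun hlt => scaleDisjoint_scaleShell (hgap i i' hlt))
      fun hgt => (scaleDisjoint_scaleShell (hgap i' i hgt)).symm,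
    fun j _ _ hii' => (h.scaleDisjoint j hii').mono inter_subset_left inter_subset_left⟩

theorem exists_isScaleMatrix (n m : ℕ) (hr : 0 < r) (F₀ : Set X) (F : Fin n → Set X)
    (hF₀ : ScaleDimZero (r + n * (4 * r * m)) F₀)
    (hF : ∀ j, ScaleDimZero (r + n * (4 * r * m)) (F j)) :
    ∃ (Z : Fin m → Set X) (M : Fin m → Fin n → Set X),
      IsScaleMatrix r (F₀ ∪ ⋃ j, F j) Z M := by
  induction n generalizing F₀ with
  | zero =>
    have hF₀' : ScaleDimZero r F₀ := by simpa using hF₀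
    exact ⟨fun _ => F₀, fun _ => F, fun _ => hF₀', fun _ j => j.elim0, fun _ => Subset.rfl,
      fun j => j.elim0⟩
  | succ n ih =>
    set ρ : ℝ := 4 * r * m
    have hρ : 0 ≤ ρ := by positivity
    have hscale : r + (n + 1 : ℕ) * ρ = r + n * ρ + ρ := by push_cast; ring
    rw [hscale] at hF₀ hF
    have hr_nonneg : 0 ≤ r + n * ρ := by positivity
    have hr_le : r ≤ r + n * ρ + ρ := by linarith [mul_nonneg n.cast_nonneg hρ]
    obtain ⟨Z, M, hM⟩ := ih (Metric.thickening ρ F₀) (fun j => Metric.thickening ρ (F j.succ))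
      (hF₀.thickening hr_nonneg hρ) fun j => (hF j.succ).thickening hr_nonneg hρ
    rw [← Metric.thickening_iUnion, ← Metric.thickening_union] at hM
    let a (i : Fin m) : ℝ := 4 * r * (i + 1)
    have ha (i : Fin m) : 0 < a i := by positivity
    have haρ (i : Fin m) : a i ≤ ρ := by
      have : (i : ℝ) + 1 ≤ m := by exact_mod_cast i.2
      exact mul_le_mul_of_nonneg_left this (by positivity)
    have hgap (i i' : Fin m) (hii' : i < i') : a i + 4 * r ≤ a i' := by
      have : (i : ℝ) + 1 ≤ i' := by exact_mod_cast hii'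
      calc a i + 4 * r = 4 * r * ((i + 1) + 1) := by ring
        _ ≤ 4 * r * (i' + 1) := by gcongr
    have hcons := hM.cons ha hgap (fun i => Metric.thickening_mono (haρ i) _)
      ((hF 0).mono hr_le Subset.rfl)
    have hunion : F₀ ∪ ⋃ j, F j = (F₀ ∪ ⋃ j : Fin n, F j.succ) ∪ F 0 := by
      rw [iUnion_fin_add_one_eq_iUnion_succ]; ac_rfl
    exact ⟨_, _, hunion ▸ hcons⟩

end

/-- Let `X` be an `∞`-pseudo-metric space and `n ≥ 0` an integer. The asymptotic dimension of
`X` is at most `n` (for every `r > 0`, `X` decomposes into `n + 1` subsets of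
scale-`r`-dimension `0`) if and only if for every real `r > 0` and every integer `m ≥ 1` there
is a family of subsets `M i j` of `X`, `i : Fin m`, `j : Fin (n+1)`, such that every `M i j`
is of scale-`r`-dimension `0`, each row covers `X`, and each column except the `0`-th one is
scale-`r`-disjoint. -/
theorem asdim_le_iff_matrix {X : Type*} [PseudoEMetricSpace X] (n : ℕ) :
    (∀ r : ℝ, 0 < r → ∃ F : Fin (n + 1) → Set X,
        (⋃ i, F i) = univ ∧ ∀ i, ScaleDimZero r (F i)) ↔
    (∀ r : ℝ, 0 < r → ∀ m : ℕ, 1 ≤ m →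
      ∃ M : Fin m → Fin (n + 1) → Set X,
        (∀ i j, ScaleDimZero r (M i j)) ∧
        (∀ i, (⋃ j, M i j) = univ) ∧
        (∀ i i' : Fin m, i ≠ i' → ∀ j : Fin (n + 1), j ≠ 0 →
          ScaleDisjoint r (M i j) (M i' j))) := by
  constructor
  · intro h r hr m _
    obtain ⟨F, hF, hdim⟩ := h (r + n * (4 * r * m)) (by positivity)
    obtain ⟨Z, M, hM⟩ := exists_isScaleMatrix n m hr (F 0) (fun j => F j.succ) (hdim 0)
      fun j => hdim j.succ
    have hcover (i : Fin m) : Z i ∪ ⋃ j, M i j = univ := by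
      rw [iUnion_fin_add_one_eq_iUnion_succ] at hF
      exact univ_subset_iff.1 (hF ▸ hM.subset_row i)
    refine ⟨fun i => Fin.cons (Z i) (M i), fun i => ?_, fun i => ?_, fun i i' hii' => ?_⟩
    · exact Fin.forall_fin_succ.2 ⟨hM.scaleDimZero_zero i, hM.scaleDimZero i⟩
    · exact (iUnion_cons _ _).trans (hcover i)
    · exact Fin.forall_fin_succ.2
        ⟨fun h0 => absurd rfl h0, fun j _ => hM.scaleDisjoint j hii'⟩
  · intro h r hr
    obtain ⟨M, hM, hcover, -⟩ := h r hr 1 le_rfl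
    exact ⟨M 0, hcover 0, hM 0⟩
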